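/- Let Ψ : [B(H)^n]_1 → [B(H)^n]_1 be a free holomorphic map with Ψ(0)=0. Then Ψ is a free holomorphic automorphism of [B(H)^n]_1 if and only if there is a unitary operator U on ℂ^n such that Ψ(X_1,...,X_n) = Φ_U(X_1,...,X_n) := [X_1,...,X_n]U for all (X_1,...,X_n) ∈ [B(H)^n]_1. -/

import Mathlib

noncomputable section

open Filter

namespace NC

variable {H : Type*} [NormedAddCommGroup H] [InnerProductSpace ℂ H] [CompleteSpace H]

/-- The product `X_α = X_{i₁} ⋯ X_{i_k}` for a word `α = g_{i₁} ⋯ g_{i_k}`. -/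
def wordProd {n : ℕ} (X : Fin n → H →L[ℂ] H) (w : List (Fin n)) : H →L[ℂ] H :=
  (w.map X).prod

/-- The row norm `‖X₁X₁^* + ⋯ + XₙXₙ^*‖^{1/2}` of a tuple. -/
def rowNorm {n : ℕ} (X : Fin n → H →L[ℂ] H) : ℝ :=
  Real.sqrt ‖∑ i, X i * ContinuousLinearMap.adjoint (X i)‖

/-- The open operatorial ball `[B(H)ⁿ]_γ`. -/
def ball (n : ℕ) (H : Type*) [NormedAddCommGroup H] [InnerProductSpace ℂ H]
    [CompleteSpace H] (γ : ℝ) : Set (Fin n → H →L[ℂ] H) :=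
  {X | rowNorm X < γ}

/-- The closed operatorial ball `[B(H)ⁿ]_γ⁻`. -/
def cball (n : ℕ) (H : Type*) [NormedAddCommGroup H] [InnerProductSpace ℂ H]
    [CompleteSpace H] (γ : ℝ) : Set (Fin n → H →L[ℂ] H) :=
  {X | rowNorm X ≤ γ}

/-- The homogeneous part of degree `k` of the power series with coefficients `a`,
evaluated at `X`:  `∑_{|α|=k} a_α X_α`. -/
def homog {n : ℕ} (a : List (Fin n) → ℂ) (X : Fin n → H →L[ℂ] H) (k : ℕ) :
    H →L[ℂ] H :=
  ∑ w : Fin k → Fin n, a (List.ofFn w) • wordProd X (List.ofFn w)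

/-- `RepOn γ a F` means that the free power series with coefficients `a` converges in
operator norm to `F X` at every point `X` of the open ball `[B(H)ⁿ]_γ`; i.e. `F` is the
free holomorphic function with coefficients `a` on `[B(H)ⁿ]_γ`. -/
def RepOn {n : ℕ} (γ : ℝ) (a : List (Fin n) → ℂ)
    (F : (Fin n → H →L[ℂ] H) → H →L[ℂ] H) : Prop :=
  ∀ X ∈ ball n H γ,
    Tendsto (fun N => ∑ k ∈ Finset.range N, homog a X k) atTop (nhds (F X))

/-- `F` is a free holomorphic function (with scalar coefficients) on `[B(H)ⁿ]_γ`. -/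
def IsFreeHolo {n : ℕ} (γ : ℝ) (F : (Fin n → H →L[ℂ] H) → H →L[ℂ] H) : Prop :=
  ∃ a, RepOn γ a F

/-- `F` is a free holomorphic map `[B(H)ⁿ]_γ → B(H)^m`. -/
def IsFreeHoloMap {n m : ℕ} (γ : ℝ)
    (F : (Fin n → H →L[ℂ] H) → Fin m → H →L[ℂ] H) : Prop :=
  ∀ i, IsFreeHolo γ fun X => F X i

/-- `Ψ` is a free holomorphic automorphism of `[B(H)ⁿ]_γ`: a free holomorphic map of the
ball to itself admitting a free holomorphic inverse. -/
def IsFreeAut {n : ℕ} (γ : ℝ) (Ψ : (Fin n → H →L[ℂ] H) → Fin n → H →L[ℂ] H) : Prop :=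
  IsFreeHoloMap γ Ψ ∧ Set.MapsTo Ψ (ball n H γ) (ball n H γ) ∧
    ∃ Φ, IsFreeHoloMap γ Φ ∧ Set.MapsTo Φ (ball n H γ) (ball n H γ) ∧
      (∀ X ∈ ball n H γ, Φ (Ψ X) = X) ∧ ∀ X ∈ ball n H γ, Ψ (Φ X) = X

end NC


namespace NC

variable {H : Type*} [NormedAddCommGroup H] [InnerProductSpace ℂ H] [CompleteSpace H]

open InnerProductSpace

lemma exists_onf (hH : ¬ FiniteDimensional ℂ H) (n : ℕ) :
    ∃ e : List (Fin n) → H, Orthonormal ℂ e := by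
  obtain ⟨w, b, hb⟩ := exists_hilbertBasis ℂ H
  have hinf : Infinite w := by
    by_contra hfin
    rw [not_infinite_iff_finite] at hfin
    apply hH
    have h1 := b.dense_span
    have h2 : FiniteDimensional ℂ (Submodule.span ℂ (Set.range b)) :=
      FiniteDimensional.span_of_finite ℂ (Set.finite_range b)
    rw [(Submodule.closed_of_finiteDimensional _).submodule_topologicalClosure_eq] at h1
    rw [h1] at h2
    exact Module.finite_def.mpr (Module.Finite.iff_fg.mp h2)
  let f : List (Fin n) → w := fun l => Infinite.natEmbedding w (Encodable.encode l)
  refine ⟨fun l => b (f l), b.orthonormal.comp f ?_⟩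
  intro x y hxy
  exact Encodable.encode_injective ((Infinite.natEmbedding w).injective hxy)

lemma inner_row {n : ℕ} (X : Fin n → H →L[ℂ] H) (h g : H) :
    inner ℂ ((∑ i, X i * ContinuousLinearMap.adjoint (X i)) h) g =
      ∑ i, inner ℂ (ContinuousLinearMap.adjoint (X i) h) (ContinuousLinearMap.adjoint (X i) g) := by
  simp [ContinuousLinearMap.adjoint_inner_right]

lemma rowNorm_le {n : ℕ} (X : Fin n → H →L[ℂ] H) (c : ℝ) (hc : 0 ≤ c)
    (hX : ∀ h, ∑ i, ‖ContinuousLinearMap.adjoint (X i) h‖ ^ 2 ≤ c ^ 2 * ‖h‖ ^ 2) :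
    rowNorm X ≤ c := by
  unfold rowNorm
  apply Real.sqrt_le_iff.mpr ⟨hc, ?_⟩
  refine ContinuousLinearMap.opNorm_le_bound _ (by positivity) fun h => ?_
  set P := ∑ i, X i * ContinuousLinearMap.adjoint (X i) with hP
  have h1 : ‖P h‖ ^ 2 ≤ (c * ‖h‖) * (c * ‖P h‖) := by
    have e1 : ‖P h‖ ^ 2 = ‖inner ℂ (P h) (P h)‖ := by
      rw [inner_self_eq_norm_sq_to_K]; simp
    rw [e1]
    conv_lhs => rw [hP, inner_row, ← hP]
    calc _ ≤ ∑ i, ‖ContinuousLinearMap.adjoint (X i) h‖ *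
            ‖ContinuousLinearMap.adjoint (X i) (P h)‖ :=
          (norm_sum_le _ _).trans (Finset.sum_le_sum fun i _ => norm_inner_le_norm _ _)
      _ ≤ √(∑ i, ‖ContinuousLinearMap.adjoint (X i) h‖ ^ 2) *
            √(∑ i, ‖ContinuousLinearMap.adjoint (X i) (P h)‖ ^ 2) :=
          Real.sum_mul_le_sqrt_mul_sqrt _ _ _
      _ ≤ _ := by
          gcongr
          · exact Real.sqrt_le_iff.mpr ⟨by positivity, by rw [mul_pow]; exact hX _⟩
          · exact Real.sqrt_le_iff.mpr ⟨by positivity, by rw [mul_pow]; exact hX _⟩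
  by_cases hz : ‖P h‖ = 0
  · rw [hz]; positivity
  · have : 0 < ‖P h‖ := lt_of_le_of_ne (norm_nonneg _) (Ne.symm hz)
    nlinarith

lemma norm_le_of_mem_ball {n : ℕ} {X : Fin n → H →L[ℂ] H} (hX : X ∈ ball n H 1) (j : Fin n)
    : ‖X j‖ ≤ 1 := by
  have hX' : ‖∑ i, X i * ContinuousLinearMap.adjoint (X i)‖ ≤ 1 := by
    have : rowNorm X < 1 := hX
    unfold rowNorm at this
    rw [Real.sqrt_lt' one_pos] at this
    linarith
  rw [← LinearIsometryEquiv.norm_map ContinuousLinearMap.adjoint (X j)]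
  refine ContinuousLinearMap.opNorm_le_bound _ zero_le_one fun h => ?_
  rw [one_mul]
  have h2 : ∑ i, ‖ContinuousLinearMap.adjoint (X i) h‖ ^ 2 ≤ ‖h‖ ^ 2 := by
    have h3 := inner_row X h h
    have h4 : ∑ i, ‖ContinuousLinearMap.adjoint (X i) h‖ ^ 2 =
        (inner ℂ ((∑ i, X i * ContinuousLinearMap.adjoint (X i)) h) h).re := by
      rw [h3, Complex.re_sum]
      refine Finset.sum_congr rfl fun i _ => ?_
      exact norm_sq_eq_re_inner (𝕜 := ℂ) _
    rw [h4]
    calc _ ≤ ‖inner ℂ ((∑ i, X i * ContinuousLinearMap.adjoint (X i)) h) h‖ := Complex.re_le_norm _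
      _ ≤ _ := norm_inner_le_norm _ _
      _ ≤ (1 * ‖h‖) * ‖h‖ := by
        gcongr
        exact ContinuousLinearMap.le_of_opNorm_le _ hX' h
      _ = _ := by ring
  have h5 : ‖ContinuousLinearMap.adjoint (X j) h‖ ^ 2 ≤ ‖h‖ ^ 2 :=
    (Finset.single_le_sum (f := fun i => ‖ContinuousLinearMap.adjoint (X i) h‖ ^ 2)
      (fun i _ => by positivity) (Finset.mem_univ j)).trans h2
  exact (sq_le_sq₀ (norm_nonneg _) (norm_nonneg _)).mp h5

/-- Truncated creation operators. -/
def cre {n : ℕ} (e : List (Fin n) → H) (W : Finset (List (Fin n))) (r : ℂ) (i : Fin n) :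
    H →L[ℂ] H :=
  r • ∑ w ∈ W, rankOne ℂ (e (i :: w)) (e w)

lemma cre_mem {n : ℕ} {e : List (Fin n) → H} (he : Orthonormal ℂ e) (W : Finset (List (Fin n)))
    (r : ℝ) (h0 : 0 ≤ r) (h1 : r < 1) : cre e W r ∈ ball n H 1 := by
  refine lt_of_le_of_lt (rowNorm_le _ r h0 fun h => ?_) h1
  have key : ∀ i, ‖ContinuousLinearMap.adjoint (cre e W r i) h‖ ^ 2 =
      r ^ 2 * ∑ w ∈ W, ‖inner ℂ (e (i :: w)) h‖ ^ 2 := by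
    intro i
    have : ContinuousLinearMap.adjoint (cre e W r i) h =
        (r : ℂ) • ∑ w ∈ W, (inner ℂ (e (i :: w)) h) • e w := by
      rw [cre, LinearIsometryEquiv.map_smulₛₗ, map_sum]
      simp only [Complex.conj_ofReal, smul_apply, sum_apply, adjoint_rankOne, rankOne_apply]
    rw [this, norm_smul, mul_pow]
    congr 1
    · simp
    · have := he.inner_sum (fun w => inner ℂ (e (i :: w)) h) (fun w => inner ℂ (e (i :: w)) h) W
      have h2 := norm_sq_eq_re_inner (𝕜 := ℂ) (∑ w ∈ W, (inner ℂ (e (i :: w)) h) • e w)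
      rw [h2, this, map_sum]
      refine Finset.sum_congr rfl fun w _ => ?_
      rw [RCLike.conj_mul]
      norm_cast
  rw [Finset.sum_congr rfl fun i _ => key i, ← Finset.mul_sum]
  gcongr
  rw [← Finset.sum_product' (f := fun i w => ‖inner ℂ (e (i :: w)) h‖ ^ 2)]
  have ho : Orthonormal ℂ (fun p : Fin n × List (Fin n) => e (p.1 :: p.2)) := by
    refine he.comp (fun p : Fin n × List (Fin n) => p.1 :: p.2) ?_
    rintro ⟨a, b⟩ ⟨c, d⟩ h
    simpa using h
  exact ho.sum_inner_products_le h

lemma cre_apply {n : ℕ} {e : List (Fin n) → H} (he : Orthonormal ℂ e) (W : Finset (List (Fin n)))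
    (r : ℂ) (i : Fin n) (w : List (Fin n)) :
    cre e W r i (e w) = if w ∈ W then r • e (i :: w) else 0 := by
  classical
  simp only [cre, smul_apply, sum_apply, rankOne_apply,
    orthonormal_iff_ite.mp he]
  simp

lemma wordProd_cre {n : ℕ} {e : List (Fin n) → H} (he : Orthonormal ℂ e)
    (W : Finset (List (Fin n))) (N : ℕ) (hW : ∀ w, w ∈ W ↔ w.length < N) (r : ℂ)
    (w : List (Fin n)) :
    wordProd (cre e W r) w (e []) = if w.length ≤ N then r ^ w.length • e w else 0 := by
  induction w with
  | nil => simp [wordProd]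
  | cons i w ih =>
    have : wordProd (cre e W r) (i :: w) (e []) = cre e W r i (wordProd (cre e W r) w (e [])) := by
      simp [wordProd]
    rw [this, ih]
    simp only [List.length_cons]
    by_cases h : w.length ≤ N
    · rw [if_pos h, map_smul, cre_apply he]
      by_cases h' : w.length < N
      · rw [if_pos ((hW w).mpr h'), if_pos (by omega), smul_smul, pow_succ]
      · rw [if_neg (fun hh => h' ((hW w).mp hh)), if_neg (by omega), smul_zero]
    · rw [if_neg h, if_neg (by omega), map_zero]

lemma inner_homog {n : ℕ} {e : List (Fin n) → H} (he : Orthonormal ℂ e)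
    (W : Finset (List (Fin n))) (N : ℕ) (hW : ∀ w, w ∈ W ↔ w.length < N) (r : ℂ)
    (a : List (Fin n) → ℂ) (w : List (Fin n)) (hw : w.length ≤ N) (k : ℕ) :
    inner ℂ (e w) (homog a (cre e W r) k (e [])) =
      if k = w.length then a w * r ^ w.length else 0 := by
  classical
  have h1 : inner ℂ (e w) (homog a (cre e W r) k (e [])) =
      ∑ u : Fin k → Fin n, if w = List.ofFn u then a w * r ^ w.length else 0 := by
    rw [homog, sum_apply, inner_sum]
    refine Finset.sum_congr rfl fun u _ => ?_
    rw [smul_apply, wordProd_cre he W N hW]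
    by_cases hu : w = List.ofFn u
    · rw [if_pos hu, ← hu, if_pos hw, inner_smul_right, inner_smul_right,
        orthonormal_iff_ite.mp he]
      simp
    · rw [if_neg hu]
      split_ifs
      · rw [inner_smul_right, inner_smul_right, orthonormal_iff_ite.mp he, if_neg hu]
        simp
      · simp
  rw [h1]
  split_ifs with hk
  · subst hk
    rw [Finset.sum_eq_single w.get]
    · simp
    · intro u _ hu
      rw [if_neg]
      intro h
      apply hu
      apply List.ofFn_injective
      rw [← h, List.ofFn_get]
    · simp
  · refine Finset.sum_eq_zero fun u _ => if_neg ?_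
    intro h
    apply hk
    rw [h, List.length_ofFn]

lemma coeff_bound (hH : ¬ FiniteDimensional ℂ H) {n : ℕ}
    (F : (Fin n → H →L[ℂ] H) → Fin n → H →L[ℂ] H)
    (hF : Set.MapsTo F (ball n H 1) (ball n H 1)) (j : Fin n) (a : List (Fin n) → ℂ)
    (ha : RepOn 1 a fun X => F X j) (V : Finset (List (Fin n))) :
    ∑ w ∈ V, ‖a w‖ ^ 2 ≤ 1 := by
  obtain ⟨e, he⟩ := exists_onf hH n
  obtain ⟨N, hN⟩ : ∃ N, ∀ w ∈ V, w.length ≤ N :=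
    ⟨V.sup List.length, fun w hw => Finset.le_sup hw⟩
  let W : Finset (List (Fin n)) := (List.finite_length_lt (Fin n) N).toFinset
  have hW : ∀ w, w ∈ W ↔ w.length < N := by intro w; simp [W]
  have main : ∀ r : ℝ, 0 ≤ r → r < 1 → ∑ w ∈ V, ‖a w‖ ^ 2 * (r ^ w.length) ^ 2 ≤ 1 := by
    intro r h0 h1
    have hX := cre_mem he W r h0 h1
    have hn := norm_le_of_mem_ball (hF hX) j
    have hin : ∀ w ∈ V, inner ℂ (e w) (F (cre e W r) j (e [])) = a w * (r : ℂ) ^ w.length := by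
      intro w hw
      have hc : Continuous fun T : H →L[ℂ] H => (inner ℂ (e w) (T (e [])) : ℂ) := by fun_prop
      have ht := (hc.tendsto _).comp (ha _ hX)
      refine tendsto_nhds_unique ht ?_
      refine tendsto_atTop_of_eventually_const (i₀ := w.length + 1) fun M hM => ?_
      simp only [Function.comp, sum_apply, inner_sum]
      rw [Finset.sum_congr rfl fun k _ => inner_homog he W N hW r a w (hN w hw) k]
      rw [Finset.sum_ite_eq', if_pos (Finset.mem_range.mpr (by omega))]
    have hb := he.sum_inner_products_le (s := V) (F (cre e W r) j (e []))
    have h3 : ‖F (cre e W r) j (e [])‖ ≤ 1 := by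
      have := ContinuousLinearMap.le_of_opNorm_le _ hn (e [])
      rwa [he.1, one_mul] at this
    calc _ = ∑ w ∈ V, ‖inner ℂ (e w) (F (cre e W r) j (e []))‖ ^ 2 := by
          refine Finset.sum_congr rfl fun w hw => ?_
          rw [hin w hw, norm_mul, mul_pow, norm_pow, Complex.norm_real, Real.norm_of_nonneg h0]
      _ ≤ _ := hb
      _ ≤ 1 := pow_le_one₀ (norm_nonneg _) h3
  have hc : Continuous fun r : ℝ => ∑ w ∈ V, ‖a w‖ ^ 2 * (r ^ w.length) ^ 2 := by fun_prop
  have ht := (hc.tendsto 1).mono_left (nhdsWithin_le_nhds (s := Set.Iio 1))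
  simp only [one_pow, mul_one] at ht
  refine le_of_tendsto ht ?_
  filter_upwards [Ioo_mem_nhdsLT (zero_lt_one (α := ℝ))] with r hr
  exact main r hr.1.le hr.2

lemma homog_zero_deg {n : ℕ} (a : List (Fin n) → ℂ) (X : Fin n → H →L[ℂ] H) :
    homog a X 0 = a [] • 1 := by
  simp [homog, wordProd]

lemma homog_one_deg {n : ℕ} (a : List (Fin n) → ℂ) (X : Fin n → H →L[ℂ] H) :
    homog a X 1 = ∑ i, a [i] • X i := by
  rw [homog, ← (Equiv.funUnique (Fin 1) (Fin n)).symm.sum_comp]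
  simp [wordProd]

/-- If only the degree one part survives, the function is linear. -/
lemma eq_linear {n : ℕ} {a : List (Fin n) → ℂ} {F : (Fin n → H →L[ℂ] H) → H →L[ℂ] H}
    (ha : RepOn 1 a F) (X : Fin n → H →L[ℂ] H) (hX : X ∈ ball n H 1)
    (hz : ∀ k, k ≠ 1 → homog a X k = 0) : F X = ∑ i, a [i] • X i := by
  refine tendsto_nhds_unique (ha X hX) ?_
  refine tendsto_atTop_of_eventually_const (i₀ := 2) fun M hM => ?_
  rw [Finset.sum_eq_single 1 (fun k _ hk => hz k hk), homog_one_deg]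
  intro h
  exact absurd (Finset.mem_range.mpr (by omega)) h

lemma homog_nilp {n : ℕ} (a : List (Fin n) → ℂ) (h0 : a [] = 0) (X : Fin n → H →L[ℂ] H)
    (hX : ∀ i j, X i * X j = 0) (k : ℕ) (hk : k ≠ 1) : homog a X k = 0 := by
  match k, hk with
  | 0, _ => rw [homog_zero_deg, h0, zero_smul]
  | (k + 2), _ =>
    refine Finset.sum_eq_zero fun w _ => ?_
    have : wordProd X (List.ofFn w) = 0 := by
      rw [wordProd, List.ofFn_succ, List.ofFn_succ, List.map_cons, List.map_cons, List.prod_cons,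
        List.prod_cons, ← mul_assoc, hX, zero_mul]
    rw [this, smul_zero]

lemma zero_mem_ball (n : ℕ) : (0 : Fin n → H →L[ℂ] H) ∈ ball n H 1 := by
  simp [ball, rowNorm]

lemma coeff_nil [Nontrivial H] {n : ℕ} {a : List (Fin n) → ℂ}
    {F : (Fin n → H →L[ℂ] H) → H →L[ℂ] H}
    (ha : RepOn 1 a F) (h0 : F 0 = 0) : a [] = 0 := by
  have ht := ha 0 (zero_mem_ball n)
  have h2 : Tendsto (fun N => ∑ k ∈ Finset.range N, homog a (0 : Fin n → H →L[ℂ] H) k) atTop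
      (nhds (a [] • 1)) := by
    refine tendsto_atTop_of_eventually_const (i₀ := 1) fun M hM => ?_
    rw [Finset.sum_eq_single 0, homog_zero_deg]
    · intro k _ hk
      obtain ⟨k, rfl⟩ := Nat.exists_eq_succ_of_ne_zero hk
      refine Finset.sum_eq_zero fun w _ => ?_
      simp [wordProd, List.ofFn_succ]
    · intro h
      exact absurd (Finset.mem_range.mpr (by omega)) h
  have h3 := tendsto_nhds_unique ht h2
  rw [h0] at h3
  simpa using h3.symm

lemma unitary_rowNorm {n : ℕ} (U : Matrix (Fin n) (Fin n) ℂ) (hU : U ∈ Matrix.unitaryGroup (Fin n) ℂ)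
    (X : Fin n → H →L[ℂ] H) : rowNorm (fun j => ∑ i, U i j • X i) = rowNorm X := by
  unfold rowNorm
  congr 2
  have h1 : ∀ i k, ∑ j, U i j * star (U k j) = if i = k then 1 else 0 := by
    intro i k
    have := congrFun (congrFun (Matrix.mem_unitaryGroup_iff.mp hU) i) k
    simpa [Matrix.mul_apply, Matrix.one_apply] using this
  have h2 : ∀ j, (∑ i, U i j • X i) * ContinuousLinearMap.adjoint (∑ i, U i j • X i) =
      ∑ i, ∑ k, (U i j * star (U k j)) • (X i * ContinuousLinearMap.adjoint (X k)) := by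
    intro j
    rw [map_sum, Finset.sum_mul_sum]
    refine Finset.sum_congr rfl fun i _ => Finset.sum_congr rfl fun k _ => ?_
    rw [LinearIsometryEquiv.map_smulₛₗ, smul_mul_smul_comm]
    rfl
  rw [Finset.sum_congr rfl fun j _ => h2 j, Finset.sum_comm]
  refine Finset.sum_congr rfl fun i _ => ?_
  rw [Finset.sum_comm]
  simp_rw [← Finset.sum_smul, h1]
  simp

lemma linear_isFreeHoloMap {n : ℕ} (U : Matrix (Fin n) (Fin n) ℂ) :
    IsFreeHoloMap 1 (fun (X : Fin n → H →L[ℂ] H) j => ∑ i, U i j • X i) := by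
  intro j
  refine ⟨fun w => match w with
    | [i] => U i j
    | _ => 0, fun X hX => ?_⟩
  refine tendsto_atTop_of_eventually_const (i₀ := 2) fun M hM => ?_
  rw [Finset.sum_eq_single 1, homog_one_deg]
  · intro k _ hk
    match k, hk with
    | 0, _ => rw [homog_zero_deg, zero_smul]
    | (k + 2), _ =>
      refine Finset.sum_eq_zero fun w _ => ?_
      simp [List.ofFn_succ]
  · intro h
    exact absurd (Finset.mem_range.mpr (by omega)) h

lemma unitary_inv {n : ℕ} (U V : Matrix (Fin n) (Fin n) ℂ) (hUV : U * V = 1)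
    (X : Fin n → H →L[ℂ] H) (k : Fin n) : ∑ j, V j k • ∑ i, U i j • X i = X k := by
  simp_rw [Finset.smul_sum, smul_smul]
  rw [Finset.sum_comm]
  have : ∀ i, ∑ j, V j k * U i j = if i = k then 1 else 0 := by
    intro i
    have := congrFun (congrFun hUV i) k
    rw [Matrix.mul_apply, Matrix.one_apply] at this
    rw [← this]
    exact Finset.sum_congr rfl fun j _ => mul_comm _ _
  simp_rw [← Finset.sum_smul, this]
  simp

lemma eq_star_of_bound {n : ℕ} (A B : Matrix (Fin n) (Fin n) ℂ) (hAB : A * B = 1)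
    (hA : ∀ j, ∑ i, ‖A i j‖ ^ 2 ≤ 1) (hB : ∀ j, ∑ i, ‖B i j‖ ^ 2 ≤ 1) : B = star A := by
  have h1 : ∀ i j, ‖A i j - star (B j i)‖ ^ 2 =
      ‖A i j‖ ^ 2 + ‖B j i‖ ^ 2 - 2 * (A i j * B j i).re := by
    intro i j
    simp only [← Complex.normSq_eq_norm_sq, Complex.normSq_apply, Complex.sub_re, Complex.sub_im,
      Complex.star_def, Complex.conj_re, Complex.conj_im, Complex.mul_re]
    ring
  have h2 : ∑ i, ∑ j, (A i j * B j i).re = n := by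
    have : ∀ i, ∑ j, (A i j * B j i).re = 1 := by
      intro i
      have := congrFun (congrFun hAB i) i
      rw [Matrix.mul_apply, Matrix.one_apply, if_pos rfl] at this
      rw [← Complex.re_sum, this, Complex.one_re]
    rw [Finset.sum_congr rfl fun i _ => this i]
    simp
  have h3 : ∑ i, ∑ j, ‖A i j‖ ^ 2 ≤ (n : ℝ) := by
    rw [Finset.sum_comm]
    exact (Finset.sum_le_sum fun j _ => hA j).trans (by simp)
  have h4 : ∑ i, ∑ j, ‖B j i‖ ^ 2 ≤ (n : ℝ) :=
    (Finset.sum_le_sum fun j _ => hB j).trans (by simp)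
  have h5 : ∑ i, ∑ j, ‖A i j - star (B j i)‖ ^ 2 ≤ 0 := by
    simp_rw [h1, Finset.sum_sub_distrib, Finset.sum_add_distrib, ← Finset.mul_sum]
    linarith
  ext i j
  have h6 : ‖A j i - star (B i j)‖ ^ 2 ≤ 0 := by
    refine le_trans ?_ h5
    refine le_trans ?_ (Finset.single_le_sum (f := fun i => ∑ j, ‖A i j - star (B j i)‖ ^ 2)
      (fun _ _ => by positivity) (Finset.mem_univ j))
    exact Finset.single_le_sum (f := fun i => ‖A j i - star (B i j)‖ ^ 2)
      (fun _ _ => by positivity) (Finset.mem_univ i)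
  have h7 : A j i - star (B i j) = 0 := by
    rw [← norm_eq_zero]
    exact pow_eq_zero_iff (two_ne_zero) |>.mp (le_antisymm h6 (by positivity))
  rw [Matrix.star_apply, sub_eq_zero.mp h7, star_star]

lemma derivative_inv (hH : ¬ FiniteDimensional ℂ H) {n : ℕ}
    (F G : (Fin n → H →L[ℂ] H) → Fin n → H →L[ℂ] H)
    (hF : Set.MapsTo F (ball n H 1) (ball n H 1)) (hGF : ∀ X ∈ ball n H 1, G (F X) = X)
    (a b : Fin n → List (Fin n) → ℂ) (ha : ∀ j, RepOn 1 (a j) fun X => F X j)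
    (hb : ∀ j, RepOn 1 (b j) fun X => G X j) (ha0 : ∀ j, a j [] = 0) (hb0 : ∀ j, b j [] = 0) :
    (Matrix.of fun i j => a j [i]) * (Matrix.of fun i j => b j [i]) = 1 := by
  obtain ⟨e, he⟩ := exists_onf hH n
  set X := cre e {[]} ((1 / 2 : ℝ) : ℂ) with hXdef
  have hX : X ∈ ball n H 1 := cre_mem he _ _ (by norm_num) (by norm_num)
  have hXX : ∀ i j, X i * X j = 0 := by
    intro i j
    ext h
    have : (inner ℂ (e []) (e [j]) : ℂ) = 0 := he.2 (by simp)
    simp [hXdef, cre, this]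
  have hY : ∀ j, F X j = ∑ i, a j [i] • X i := fun j =>
    eq_linear (ha j) X hX fun k hk => homog_nilp (a j) (ha0 j) X hXX k hk
  have hYY : ∀ i j, F X i * F X j = 0 := by
    intro i j
    rw [hY, hY, Finset.sum_mul_sum]
    refine Finset.sum_eq_zero fun i _ => Finset.sum_eq_zero fun k _ => ?_
    rw [smul_mul_smul_comm, hXX, smul_zero]
  have hZ : ∀ k, X k = ∑ j, b k [j] • F X j := fun k => by
    rw [← eq_linear (hb k) (F X) (hF hX) fun l hl => homog_nilp (b k) (hb0 k) (F X) hYY l hl]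
    rw [hGF X hX]
  ext i k
  have h1 := congrArg (fun T : H →L[ℂ] H => (inner ℂ (e [i]) (T (e [])) : ℂ)) (hZ k)
  have h2 : ∀ l, (inner ℂ (e [i]) (X l (e [])) : ℂ) = if i = l then 1 / 2 else 0 := by
    intro l
    classical
    rw [hXdef, cre_apply he, if_pos (by simp), inner_smul_right, orthonormal_iff_ite.mp he]
    simp
  simp only [hY, sum_apply, smul_apply, inner_sum,
    inner_smul_right, h2] at h1
  simp only [mul_ite, mul_zero, Finset.sum_ite_eq, Finset.mem_univ, if_true] at h1
  rw [Matrix.mul_apply, Matrix.one_apply]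
  simp only [Matrix.of_apply]
  have h3 : (∑ j, a j [i] * b k [j]) * (1 / 2) = (if i = k then 1 else 0) * (1 / 2) := by
    rw [Finset.sum_mul, ite_mul, zero_mul, one_mul, h1]
    exact Finset.sum_congr rfl fun j _ => by ring
  exact mul_right_cancel₀ (by norm_num) h3

end NC

open NC in
/-- A free holomorphic self-map `Ψ` of `[B(H)ⁿ]_1` with `Ψ(0) = 0` is a free holomorphic
automorphism of `[B(H)ⁿ]_1` if and only if it is implemented by a unitary operator `U` on
`ℂⁿ`, i.e. `Ψ(X) = [X₁,…,Xₙ]U`. -/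
theorem aut_fixing_origin_iff_unitary
    {H : Type*} [NormedAddCommGroup H] [InnerProductSpace ℂ H] [CompleteSpace H]
    [TopologicalSpace.SeparableSpace H] (hH : ¬ FiniteDimensional ℂ H)
    {n : ℕ}
    (Ψ : (Fin n → H →L[ℂ] H) → Fin n → H →L[ℂ] H)
    (hΨ : IsFreeHoloMap 1 Ψ) (hmaps : Set.MapsTo Ψ (ball n H 1) (ball n H 1))
    (h0 : Ψ 0 = 0) :
    IsFreeAut 1 Ψ ↔
      ∃ U ∈ Matrix.unitaryGroup (Fin n) ℂ,
        ∀ X ∈ ball n H 1, ∀ j, Ψ X j = ∑ i, U i j • X i := by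
  classical
  have hnt : Nontrivial H := by
    by_contra h
    rw [not_nontrivial_iff_subsingleton] at h
    exact hH inferInstance
  constructor
  · rintro ⟨-, -, Φ, hΦ, hΦm, h1, h2⟩
    choose a ha using hΨ
    choose b hb using hΦ
    have hΦ0 : Φ 0 = 0 := by
      have := h1 0 (zero_mem_ball n)
      rwa [h0] at this
    have ha0 : ∀ j, a j [] = 0 := fun j => coeff_nil (ha j) (by rw [h0]; rfl)
    have hb0 : ∀ j, b j [] = 0 := fun j => coeff_nil (hb j) (by rw [hΦ0]; rfl)
    have hAB := derivative_inv hH Ψ Φ hmaps h1 a b ha hb ha0 hb0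
    have hsing : ∀ (c : List (Fin n) → ℂ), ∑ w ∈ Finset.univ.image (fun i : Fin n => [i]),
        ‖c w‖ ^ 2 = ∑ i, ‖c [i]‖ ^ 2 := fun c =>
      Finset.sum_image (fun x _ y _ h => by simpa using h)
    have hstar := eq_star_of_bound _ _ hAB
      (fun j => by
        have := coeff_bound hH Ψ hmaps j (a j) (ha j) (Finset.univ.image fun i : Fin n => [i])
        rw [hsing] at this
        exact this)
      (fun j => by
        have := coeff_bound hH Φ hΦm j (b j) (hb j) (Finset.univ.image fun i : Fin n => [i])
        rw [hsing] at this
        exact this)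
    rw [hstar] at hAB
    have hU := Matrix.mem_unitaryGroup_iff.mpr hAB
    refine ⟨_, hU, fun X hX j => ?_⟩
    have hcol : ∑ i, ‖a j [i]‖ ^ 2 = 1 := by
      have := congrFun (congrFun (Matrix.mem_unitaryGroup_iff'.mp hU) j) j
      rw [Matrix.mul_apply, Matrix.one_apply, if_pos rfl] at this
      have h3 : ((∑ i, ‖a j [i]‖ ^ 2 : ℝ) : ℂ) = 1 := by
        rw [← this]
        push_cast
        refine Finset.sum_congr rfl fun i _ => ?_
        exact (RCLike.conj_mul (a j [i])).symm
      exact_mod_cast h3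
    have hvan : ∀ w : List (Fin n), w.length ≠ 1 → a j w = 0 := by
      intro w hw
      have hnot : w ∉ Finset.univ.image (fun i : Fin n => [i]) := by
        intro h
        obtain ⟨i, -, rfl⟩ := Finset.mem_image.mp h
        simp at hw
      have := coeff_bound hH Ψ hmaps j (a j) (ha j)
        (insert w (Finset.univ.image fun i : Fin n => [i]))
      rw [Finset.sum_insert hnot, hsing, hcol] at this
      have h4 : ‖a j w‖ ^ 2 = 0 := le_antisymm (by linarith) (by positivity)
      simpa using h4
    exact eq_linear (ha j) X hX fun k hk => Finset.sum_eq_zero fun w _ => by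
      rw [hvan _ (by simpa using hk), zero_smul]
  · rintro ⟨U, hU, hUX⟩
    have hU' : star U ∈ Matrix.unitaryGroup (Fin n) ℂ := Unitary.star_mem hU
    have hm : Set.MapsTo (fun (X : Fin n → H →L[ℂ] H) j => ∑ i, (star U) i j • X i)
        (ball n H 1) (ball n H 1) := fun X hX => by
      have := unitary_rowNorm (star U) hU' X
      simp only [ball, Set.mem_setOf_eq] at hX ⊢
      rwa [this]
    refine ⟨hΨ, hmaps, fun X j => ∑ i, (star U) i j • X i, linear_isFreeHoloMap _, hm, ?_, ?_⟩
    · intro X hX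
      funext k
      simp only [hUX X hX]
      exact unitary_inv U (star U) (Matrix.mem_unitaryGroup_iff.mp hU) X k
    · intro X hX
      funext k
      rw [hUX _ (hm hX)]
      exact unitary_inv (star U) U (Matrix.mem_unitaryGroup_iff'.mp hU) X k
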